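/- Let (E,F,H) be a representation of sl(2,ℂ) on a complex vector space V with not all of E, F, H equal to zero. Let (ρ^>_i)_{i≥−1} be a Witt_>-module structure on V compatible with (E,F,H) and let (ρ^<_i)_{i≤1} be a Witt_<-module structure on V compatible with (E,F,H); set T = ρ^>₂, S = ρ^<₋₂ and K = 4H − 2[S,T] ∈ End(V). Then there exists a Virasoro-module structure ((ρ_i)_{i∈ℤ}, K') on V compatible with (E,F,H) with ρ_i = ρ^>_i for all i ≥ −1 and ρ_i = ρ^<_i for all i ≤ 1 if and only if K commutes with both S and T. Moreover, in that case every such Virasoro-module structure has K' = K. -/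

import Mathlib

/-- Witt_>-module structure compatible with `(E,F,H)`. -/
def IsWittGtModule {V : Type*} [AddCommGroup V] [Module ℂ V]
    (E F H : Module.End ℂ V) (ρ : ℤ → Module.End ℂ V) : Prop :=
  ρ (-1) = F ∧ ρ 0 = (-(1/2) : ℂ) • H ∧ ρ 1 = -E ∧
    ∀ i j : ℤ, -1 ≤ i → -1 ≤ j → ⁅ρ i, ρ j⁆ = ((i - j : ℤ) : ℂ) • ρ (i + j)

/-- Witt_<-module structure compatible with `(E,F,H)`. -/
def IsWittLtModule {V : Type*} [AddCommGroup V] [Module ℂ V]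
    (E F H : Module.End ℂ V) (ρ : ℤ → Module.End ℂ V) : Prop :=
  ρ (-1) = F ∧ ρ 0 = (-(1/2) : ℂ) • H ∧ ρ 1 = -E ∧
    ∀ i j : ℤ, i ≤ 1 → j ≤ 1 → ⁅ρ i, ρ j⁆ = ((i - j : ℤ) : ℂ) • ρ (i + j)

/-- Virasoro-module structure compatible with `(E,F,H)`; `K'` represents the
central element `C`. -/
def IsVirasoroModule {V : Type*} [AddCommGroup V] [Module ℂ V]
    (E F H : Module.End ℂ V) (ρ : ℤ → Module.End ℂ V) (K' : Module.End ℂ V) : Prop :=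
  ρ (-1) = F ∧ ρ 0 = (-(1/2) : ℂ) • H ∧ ρ 1 = -E ∧
    (∀ i : ℤ, ⁅K', ρ i⁆ = 0) ∧
    ∀ i j : ℤ, ⁅ρ i, ρ j⁆ = ((i - j : ℤ) : ℂ) • ρ (i + j) +
      (if i + j = 0 then (((i ^ 3 - i : ℤ) : ℂ) / 12) • K' else 0)

set_option linter.unusedSimpArgs false

/-- First half of the relations. -/
theorem vir_aux1 {g : Type*} [LieRing g] [LieAlgebra ℂ g] (L : ℤ → g) (K : g)
    (hg : ∀ i j : ℤ, -1 ≤ i → -1 ≤ j → ⁅L i, L j⁆ = ((i - j : ℤ) : ℂ) • L (i + j))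
    (hl : ∀ i j : ℤ, i ≤ 1 → j ≤ 1 → ⁅L i, L j⁆ = ((i - j : ℤ) : ℂ) • L (i + j))
    (hTS : ⁅L 2, L (-2)⁆ = (4 : ℂ) • L 0 + (1/2 : ℂ) • K)
    (hKT : ⁅L 2, K⁆ = 0) (hKS : ⁅L (-2), K⁆ = 0)
    (A B Q A2 A1 A11 A111 A1111 A21 A211 : g) (hA : ⁅L 1, K⁆ = A) (hB : ⁅L (-1), K⁆ = B)
    (hQ : ⁅L 1, B⁆ = Q) (hA2 : ⁅L 1, Q⁆ = A2) (hA1 : ⁅L 1, A⁆ = A1)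
    (hA11 : ⁅L 1, A1⁆ = A11) (hA111 : ⁅L 1, A11⁆ = A111) (hA1111 : ⁅L 1, A111⁆ = A1111)
    (hA21 : ⁅L 1, A2⁆ = A21) (hA211 : ⁅L 1, A21⁆ = A211) :
    ⁅L 0, K⁆ = 0 ∧ ⁅L (-1), A⁆ = Q ∧ ⁅L 0, A⁆ = -A ∧ ⁅L 0, A1⁆ = (-2 : ℂ) • A1 ∧
    ⁅L 0, A11⁆ = (-3 : ℂ) • A11 ∧ ⁅L 0, Q⁆ = 0 ∧ ⁅L 0, A2⁆ = -A2 ∧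
    ⁅L 3, L (-2)⁆ = (5 : ℂ) • L 1 - (1/2 : ℂ) • A ∧
    ⁅L (-2), A⁆ = (-3 : ℂ) • B ∧ ⁅L 2, A⁆ = (-1/12 : ℂ) • A11 ∧
    ⁅L 2, A11⁆ = (-1/10 : ℂ) • A1111 ∧
    ⁅L (-1), A1⁆ = A2 + (2 : ℂ) • A ∧ ⁅L (-1), A11⁆ = A21 + (6 : ℂ) • A1 ∧
    ⁅L (-2), A1⁆ = (-6 : ℂ) • Q ∧ ⁅L (-2), A11⁆ = (-9 : ℂ) • A2 - (6 : ℂ) • A ∧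
    ⁅L (-2), A1111⁆ = (-15 : ℂ) • A211 - (60 : ℂ) • A11 ∧
    ⁅A, K⁆ = (11 : ℂ) • A + (3/2 : ℂ) • A2 ∧
    ⁅L 2, Q⁆ = (5/2 : ℂ) • A1 - (1/12 : ℂ) • A21 := by
  have b12 := hg 1 2 (by norm_num) (by norm_num)
  have b13 := hg 1 3 (by norm_num) (by norm_num)
  have b14 := hg 1 4 (by norm_num) (by norm_num)
  have b15 := hg 1 5 (by norm_num) (by norm_num)
  have b16 := hg 1 6 (by norm_num) (by norm_num)
  have b23 := hg 2 3 (by norm_num) (by norm_num)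
  have b25 := hg 2 5 (by norm_num) (by norm_num)
  have b02 := hg 0 2 (by norm_num) (by norm_num)
  have b03 := hg 0 3 (by norm_num) (by norm_num)
  have b30 := hg 3 0 (by norm_num) (by norm_num)
  have b50 := hg 5 0 (by norm_num) (by norm_num)
  have b01 := hg 0 1 (by norm_num) (by norm_num)
  have b10 := hg 1 0 (by norm_num) (by norm_num)
  have b21 := hg 2 1 (by norm_num) (by norm_num)
  have b2m := hg 2 (-1) (by norm_num) (by norm_num)
  have bm2 := hg (-1) 2 (by norm_num) (by norm_num)
  have b3m := hg 3 (-1) (by norm_num) (by norm_num)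
  have b4m := hg 4 (-1) (by norm_num) (by norm_num)
  have b5m := hg 5 (-1) (by norm_num) (by norm_num)
  have b6m := hg 6 (-1) (by norm_num) (by norm_num)
  have b1m := hg 1 (-1) (by norm_num) (by norm_num)
  have bm1 := hg (-1) 1 (by norm_num) (by norm_num)
  have b0m := hg 0 (-1) (by norm_num) (by norm_num)
  have b0n := hl 0 (-2) (by norm_num) (by norm_num)
  have b1n := hl 1 (-2) (by norm_num) (by norm_num)
  have bn1 := hl (-2) 1 (by norm_num) (by norm_num)
  have b31 := hg 3 1 (by norm_num) (by norm_num)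
  have b52 := hg 5 2 (by norm_num) (by norm_num)
  have b32 := hg 3 2 (by norm_num) (by norm_num)
  norm_num at b12 b13 b14 b15 b16 b23 b25 b02 b03 b30 b50 b01 b10 b21 b2m bm2 b3m b4m b5m b6m b1m bm1 b0m b0n b1n bn1 b31 b52 b32
  have z0 : ⁅L 0, K⁆ = 0 := by
    have := leibniz_lie (L 0) (L 2) (L (-2))
    simp only [hTS, b02, b0n, lie_add, lie_smul, smul_lie, neg_lie, lie_neg, lie_self] at this
    linear_combination (norm := module) (2 : ℂ) • this
  have zA : ⁅L 0, A⁆ = -A := by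
    have := leibniz_lie (L 0) (L 1) K
    simp only [hA, b01, z0, lie_zero, smul_lie, neg_lie] at this
    linear_combination (norm := module) this
  have zB : ⁅L 0, B⁆ = B := by
    have := leibniz_lie (L 0) (L (-1)) K
    simp only [hB, b0m, z0, lie_zero, smul_lie, neg_lie] at this
    linear_combination (norm := module) this
  have zQ : ⁅L 0, Q⁆ = 0 := by
    have := leibniz_lie (L 0) (L 1) B
    simp only [hQ, b01, zB, lie_zero, smul_lie, neg_lie] at this
    linear_combination (norm := module) this
  have zA2 : ⁅L 0, A2⁆ = -A2 := by
    have := leibniz_lie (L 0) (L 1) Q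
    simp only [hA2, b01, zQ, lie_zero, smul_lie, neg_lie] at this
    linear_combination (norm := module) this
  have zA21 : ⁅L 0, A21⁆ = (-2 : ℂ) • A21 := by
    have := leibniz_lie (L 0) (L 1) A2
    simp only [hA21, b01, zA2, lie_neg, smul_lie, neg_lie] at this
    linear_combination (norm := module) this
  have zA1 : ⁅L 0, A1⁆ = (-2 : ℂ) • A1 := by
    have := leibniz_lie (L 0) (L 1) A
    simp only [hA1, b01, zA, lie_neg, smul_lie, neg_lie] at this
    linear_combination (norm := module) this
  have zA11 : ⁅L 0, A11⁆ = (-3 : ℂ) • A11 := by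
    have := leibniz_lie (L 0) (L 1) A1
    simp only [hA11, b01, zA1, lie_smul, smul_lie, neg_lie] at this
    linear_combination (norm := module) this
  have zA111 : ⁅L 0, A111⁆ = (-4 : ℂ) • A111 := by
    have := leibniz_lie (L 0) (L 1) A11
    simp only [hA111, b01, zA11, lie_smul, smul_lie, neg_lie] at this
    linear_combination (norm := module) this
  have fA : ⁅L (-1), A⁆ = Q := by
    have := leibniz_lie (L (-1)) (L 1) K
    simp only [hA, hB, hQ, bm1, z0, lie_smul, smul_lie, neg_lie] at this
    linear_combination (norm := module) this
  have fA1 : ⁅L (-1), A1⁆ = A2 + (2 : ℂ) • A := by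
    have := leibniz_lie (L (-1)) (L 1) A
    simp only [hA1, fA, hA2, bm1, zA, lie_smul, smul_lie, neg_lie] at this
    linear_combination (norm := module) this
  have fA11 : ⁅L (-1), A11⁆ = A21 + (6 : ℂ) • A1 := by
    have := leibniz_lie (L (-1)) (L 1) A1
    simp only [hA11, fA1, hA21, hA1, bm1, zA1, lie_add, lie_smul, smul_lie, neg_lie] at this
    linear_combination (norm := module) this
  have fA111 : ⁅L (-1), A111⁆ = A211 + (12 : ℂ) • A11 := by
    have := leibniz_lie (L (-1)) (L 1) A11
    simp only [hA111, fA11, hA211, hA11, bm1, zA11, lie_add, lie_smul, smul_lie, neg_lie] at this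
    linear_combination (norm := module) this
  have d3 : ⁅L 3, L (-2)⁆ = (5 : ℂ) • L 1 - (1/2 : ℂ) • A := by
    have := leibniz_lie (L 1) (L 2) (L (-2))
    simp only [hTS, b12, b1n, hA, b10, b2m, lie_add, lie_smul, smul_lie, neg_lie] at this
    linear_combination (norm := module) this
  have d4 : ⁅L 4, L (-2)⁆ = (6 : ℂ) • L 2 + (1/4 : ℂ) • A1 := by
    have := leibniz_lie (L 1) (L 3) (L (-2))
    simp only [d3, b13, b1n, hA1, b3m, lie_self, lie_add, lie_sub, lie_smul, smul_lie, neg_lie] at this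
    linear_combination (norm := module) (1/2 : ℂ) • this
  have d5 : ⁅L 5, L (-2)⁆ = (7 : ℂ) • L 3 - (1/12 : ℂ) • A11 := by
    have := leibniz_lie (L 1) (L 4) (L (-2))
    simp only [d4, b14, b1n, hA11, b12, b4m, lie_self, lie_add, lie_sub, lie_smul, smul_lie, neg_lie] at this
    linear_combination (norm := module) (1/3 : ℂ) • this
  have d6 : ⁅L 6, L (-2)⁆ = (8 : ℂ) • L 4 + (1/48 : ℂ) • A111 := by
    have := leibniz_lie (L 1) (L 5) (L (-2))
    simp only [d5, b15, b1n, hA111, b13, b5m, lie_self, lie_add, lie_sub, lie_smul, smul_lie, neg_lie] at this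
    linear_combination (norm := module) (1/4 : ℂ) • this
  have d7 : ⁅L 7, L (-2)⁆ = (9 : ℂ) • L 5 - (1/240 : ℂ) • A1111 := by
    have := leibniz_lie (L 1) (L 6) (L (-2))
    simp only [d6, b16, b1n, hA1111, b14, b6m, lie_self, lie_add, lie_sub, lie_smul, smul_lie, neg_lie] at this
    linear_combination (norm := module) (1/5 : ℂ) • this
  have k3 : ⁅L 3, K⁆ = ⁅L 2, A⁆ := by
    have := leibniz_lie (L 2) (L 1) K
    simp only [hKT, hA, b21, lie_zero] at this
    linear_combination (norm := module) -this
  have tA : ⁅L 2, A⁆ = (-1/12 : ℂ) • A11 := by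
    have := leibniz_lie (L 2) (L 3) (L (-2))
    simp only [d3, b23, hTS, d5, b30, k3, b21, lie_self, lie_add, lie_sub, lie_smul, smul_lie, neg_lie] at this
    linear_combination (norm := module) -this
  have k5 : ⁅L 5, K⁆ = (1/12 : ℂ) • ⁅L 2, A11⁆ := by
    have := leibniz_lie (L 2) (L 3) K
    simp only [hKT, k3, tA, b23, lie_zero, lie_smul, neg_lie] at this
    linear_combination (norm := module) this
  have tA11 : ⁅L 2, A11⁆ = (-1/10 : ℂ) • A1111 := by
    have := leibniz_lie (L 2) (L 5) (L (-2))
    simp only [d5, b25, hTS, d7, b50, k5, b23, lie_self, lie_add, lie_sub, lie_smul, smul_lie, neg_lie] at this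
    linear_combination (norm := module) (-8 : ℂ) • this
  have sA : ⁅L (-2), A⁆ = (-3 : ℂ) • B := by
    have := leibniz_lie (L (-2)) (L 1) K
    simp only [hKS, hA, hB, bn1, lie_zero, lie_smul, smul_lie, neg_lie] at this
    linear_combination (norm := module) this
  have sA1 : ⁅L (-2), A1⁆ = (-6 : ℂ) • Q := by
    have := leibniz_lie (L (-2)) (L 1) A
    simp only [sA, hA1, fA, hQ, bn1, lie_zero, lie_smul, smul_lie, neg_lie] at this
    linear_combination (norm := module) this
  have sA11 : ⁅L (-2), A11⁆ = (-9 : ℂ) • A2 - (6 : ℂ) • A := by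
    have := leibniz_lie (L (-2)) (L 1) A1
    simp only [sA1, hA11, fA1, hA2, bn1, lie_zero, lie_smul, smul_lie, neg_lie] at this
    linear_combination (norm := module) this
  have sA111 : ⁅L (-2), A111⁆ = (-12 : ℂ) • A21 - (24 : ℂ) • A1 := by
    have := leibniz_lie (L (-2)) (L 1) A11
    simp only [sA11, hA111, fA11, hA21, hA1, bn1, lie_sub, lie_smul, smul_lie, neg_lie] at this
    linear_combination (norm := module) this
  have sA1111 : ⁅L (-2), A1111⁆ = (-15 : ℂ) • A211 - (60 : ℂ) • A11 := by
    have := leibniz_lie (L (-2)) (L 1) A111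
    simp only [sA111, hA1111, fA111, hA211, hA11, bn1, lie_sub, lie_smul, smul_lie, neg_lie] at this
    linear_combination (norm := module) this
  have AK : ⁅A, K⁆ = (11 : ℂ) • A + (3/2 : ℂ) • A2 := by
    have := leibniz_lie (L 3) (L (-2)) K
    simp only [hKS, k3, tA, d3, sA11, hA, lie_zero, sub_lie, lie_smul, smul_lie, neg_lie] at this
    linear_combination (norm := module) (2 : ℂ) • this
  have tQ : ⁅L 2, Q⁆ = (5/2 : ℂ) • A1 - (1/12 : ℂ) • A21 := by
    have := leibniz_lie (L 2) (L (-1)) A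
    simp only [fA, b2m, tA, fA11, hA1, lie_smul, smul_lie, neg_lie] at this
    linear_combination (norm := module) this
  exact ⟨z0, fA, zA, zA1, zA11, zQ, zA2, d3, sA, tA, tA11, fA1, fA11, sA1, sA11, sA1111, AK, tQ⟩

/-- Second batch of relations. -/
theorem vir_aux2a {g : Type*} [LieRing g] [LieAlgebra ℂ g] (L : ℤ → g) (K : g)
    (hg : ∀ i j : ℤ, -1 ≤ i → -1 ≤ j → ⁅L i, L j⁆ = ((i - j : ℤ) : ℂ) • L (i + j))
    (hl : ∀ i j : ℤ, i ≤ 1 → j ≤ 1 → ⁅L i, L j⁆ = ((i - j : ℤ) : ℂ) • L (i + j))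
    (hTS : ⁅L 2, L (-2)⁆ = (4 : ℂ) • L 0 + (1/2 : ℂ) • K)
    (hKT : ⁅L 2, K⁆ = 0) (hKS : ⁅L (-2), K⁆ = 0)
    (A B Q A2 B2 A1 A11 A111 A1111 A21 A211 Q2 A3 : g)
    (hA : ⁅L 1, K⁆ = A) (hB : ⁅L (-1), K⁆ = B)
    (hQ : ⁅L 1, B⁆ = Q) (hA2 : ⁅L 1, Q⁆ = A2) (hB2 : ⁅L (-1), Q⁆ = B2) (hA1 : ⁅L 1, A⁆ = A1)
    (hA11 : ⁅L 1, A1⁆ = A11) (hA111 : ⁅L 1, A11⁆ = A111) (hA1111 : ⁅L 1, A111⁆ = A1111)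
    (hA21 : ⁅L 1, A2⁆ = A21) (hA211 : ⁅L 1, A21⁆ = A211) (hQ2 : ⁅L (-1), A2⁆ = Q2)
    (hA3 : ⁅L 1, Q2⁆ = A3) :
    A3 = (588 : ℂ) • A + (100 : ℂ) • A2 ∧ ⁅L 1, B2⁆ = Q2 ∧
    ⁅L (-2), A2⁆ = (44 : ℂ) • B + (3 : ℂ) • B2 ∧
    ⁅A, B⁆ = (11 : ℂ) • Q + (3/2 : ℂ) • Q2 ∧ ⁅A, A1⁆ = (-12 : ℂ) • A11 ∧
    ⁅A, Q⁆ = (286 : ℂ) • A + (125/3 : ℂ) • A2 := by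
  obtain ⟨z0, fA, zA, zA1, zA11, zQ, zA2, d3, sA, tA, tA11, fA1, fA11, sA1, sA11, sA1111, AK, tQ⟩ :=
    vir_aux1 L K hg hl hTS hKT hKS A B Q A2 A1 A11 A111 A1111 A21 A211
      hA hB hQ hA2 hA1 hA11 hA111 hA1111 hA21 hA211
  -- the same relations for the opposite family
  have hTS' : ⁅L (-2), L 2⁆ = -((4 : ℂ) • L 0 + (1/2 : ℂ) • K) := by rw [← lie_skew, hTS]
  obtain ⟨-, -, -, -, -, -, -, -, -, -, -, -, -, -, -, -, BK0, -⟩ :=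
    vir_aux1 (fun n => -L (-n)) (-K)
      (by
        intro i j hi hj
        have := hl (-i) (-j) (by omega) (by omega)
        simp only [neg_lie, lie_neg, neg_neg, this]
        rw [neg_add]; push_cast; module)
      (by
        intro i j hi hj
        have := hg (-i) (-j) (by omega) (by omega)
        simp only [neg_lie, lie_neg, neg_neg, this]
        rw [neg_add]; push_cast; module)
      (by
        simp only [neg_lie, lie_neg, neg_neg, neg_zero, hTS']; module)
      (by simp only [neg_lie, lie_neg, neg_neg, hKS])
      (by simp only [neg_lie, lie_neg, neg_neg, hKT])
      _ _ _ _ _ _ _ _ _ _ rfl rfl rfl rfl rfl rfl rfl rfl rfl rfl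
  simp only [neg_lie, lie_neg, neg_neg, hA, hB, fA, hB2] at BK0
  have BK : ⁅B, K⁆ = (-11 : ℂ) • B - (3/2 : ℂ) • B2 := by
    linear_combination (norm := module) (-1 : ℂ) • BK0
  have bm1 := hg (-1) 1 (by norm_num) (by norm_num)
  have b1m := hg 1 (-1) (by norm_num) (by norm_num)
  have bn1 := hl (-2) 1 (by norm_num) (by norm_num)
  have b2m := hg 2 (-1) (by norm_num) (by norm_num)
  norm_num at bm1 b1m bn1 b2m
  have eB2 : ⁅L 1, B2⁆ = Q2 := by
    have := leibniz_lie (L 1) (L (-1)) Q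
    simp only [hB2, hA2, hQ2, b1m, zQ, smul_lie] at this
    linear_combination (norm := module) this
  have fA21 : ⁅L (-1), A21⁆ = A3 + (2 : ℂ) • A2 := by
    have := leibniz_lie (L (-1)) (L 1) A2
    simp only [hA21, hQ2, hA3, zA2, bm1, smul_lie, neg_lie] at this
    linear_combination (norm := module) this
  have sA2 : ⁅L (-2), A2⁆ = (44 : ℂ) • B + (3 : ℂ) • B2 := by
    have := leibniz_lie (L (-2)) A K
    simp only [AK, sA, hKS, BK, lie_add, lie_smul, smul_lie, lie_zero] at this
    linear_combination (norm := module) (2/3 : ℂ) • this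
  have tB : ⁅L 2, B⁆ = (3 : ℂ) • A := by
    have := leibniz_lie (L 2) (L (-1)) K
    simp only [hB, hA, hKT, b2m, lie_zero, smul_lie] at this
    linear_combination (norm := module) this
  have tB2 : ⁅L 2, B2⁆ = (-44 : ℂ) • A - (3 : ℂ) • A2 := by
    have := leibniz_lie (L 2) B K
    simp only [BK, AK, tB, hKT, lie_sub, lie_smul, smul_lie, lie_zero] at this
    linear_combination (norm := module) (-2/3 : ℂ) • this
  have hp : A3 = (588 : ℂ) • A + (100 : ℂ) • A2 := by
    have := leibniz_lie (L 2) (L (-1)) Q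
    simp only [hB2, b2m, tB2, tQ, hA2, fA1, fA21, smul_lie, lie_sub, lie_smul] at this
    linear_combination (norm := module) (12 : ℂ) • this
  have QK1 := leibniz_lie (L (-1)) A K
  have QK2 := leibniz_lie (L 1) B K
  simp only [AK, fA, hB, hQ2, lie_add, lie_smul] at QK1
  rw [BK, ← lie_skew B _] at QK2
  simp only [hQ, hA, eB2, lie_sub, lie_smul] at QK2
  rw [lie_skew] at QK2
  have hBA : ⁅B, A⁆ = -⁅A, B⁆ := (lie_skew _ _).symm
  rw [hBA] at QK2
  have AB : ⁅A, B⁆ = (11 : ℂ) • Q + (3/2 : ℂ) • Q2 := by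
    linear_combination (norm := module) (-1/2 : ℂ) • QK1 + (1/2 : ℂ) • QK2
  have A1K : ⁅A1, K⁆ = (11 : ℂ) • A1 + (3/2 : ℂ) • A21 := by
    have := leibniz_lie (L 1) A K
    simp only [AK, hA, hA1, hA21, lie_self, lie_add, lie_smul] at this
    linear_combination (norm := module) -this
  have A11K : ⁅A11, K⁆ + ⁅A1, A⁆ = (11 : ℂ) • A11 + (3/2 : ℂ) • A211 := by
    have := leibniz_lie (L 1) A1 K
    simp only [A1K, hA, hA11, hA211, lie_add, lie_smul] at this
    linear_combination (norm := module) -this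
  have A11K' : ⁅A11, K⁆ = (11 : ℂ) • A11 - (18 : ℂ) • ⁅L 2, A2⁆ := by
    have := leibniz_lie (L 2) A K
    simp only [AK, tA, hKT, lie_add, lie_smul, smul_lie, lie_zero] at this
    linear_combination (norm := module) (12 : ℂ) • this
  have tA2 : (-18 : ℂ) • ⁅L 2, A2⁆ = (3/2 : ℂ) • A211 - (12 : ℂ) • A11 := by
    have := leibniz_lie (L 2) (L (-2)) A11
    have h2 : ⁅K, A11⁆ = -⁅A11, K⁆ := (lie_skew _ _).symm
    simp only [hTS, tA11, sA11, sA1111, tA, zA11, h2, A11K', add_lie, lie_sub, lie_smul,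
      smul_lie] at this
    linear_combination (norm := module) this
  have AA1 : ⁅A, A1⁆ = (-12 : ℂ) • A11 := by
    rw [← lie_skew]
    linear_combination (norm := module) -A11K + A11K' + tA2
  have A1B : ⁅A1, B⁆ + ⁅A, Q⁆ = (11 : ℂ) • A2 + (3/2 : ℂ) • A3 := by
    have := leibniz_lie (L 1) A B
    simp only [AB, hA1, hQ, hA2, hA3, lie_add, lie_smul] at this
    linear_combination (norm := module) -this
  have AQ : ⁅A, Q⁆ = (286 : ℂ) • A + (125/3 : ℂ) • A2 := by
    have := leibniz_lie (L (-2)) A A1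
    have h2 : ⁅B, A1⁆ = -⁅A1, B⁆ := (lie_skew _ _).symm
    simp only [AA1, sA, sA1, sA11, h2, lie_smul, smul_lie] at this
    linear_combination (norm := module) (1/9 : ℂ) • this + (1/3 : ℂ) • A1B + (1/2 : ℂ) • hp
  exact ⟨hp, eB2, sA2, AB, AA1, AQ⟩

/-- Consistency relations: the vector `[L 1, K]` vanishes. -/
theorem vir_aux2 {g : Type*} [LieRing g] [LieAlgebra ℂ g] (L : ℤ → g) (K : g)
    (hg : ∀ i j : ℤ, -1 ≤ i → -1 ≤ j → ⁅L i, L j⁆ = ((i - j : ℤ) : ℂ) • L (i + j))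
    (hl : ∀ i j : ℤ, i ≤ 1 → j ≤ 1 → ⁅L i, L j⁆ = ((i - j : ℤ) : ℂ) • L (i + j))
    (hTS : ⁅L 2, L (-2)⁆ = (4 : ℂ) • L 0 + (1/2 : ℂ) • K)
    (hKT : ⁅L 2, K⁆ = 0) (hKS : ⁅L (-2), K⁆ = 0) :
    ⁅L 0, K⁆ = 0 ∧ ⁅L 1, K⁆ = 0 ∧ ⁅L (-1), K⁆ = 0 ∧ ⁅L 3, L (-2)⁆ = (5 : ℂ) • L 1 := by
  obtain ⟨A, hA⟩ : ∃ A, ⁅L 1, K⁆ = A := ⟨_, rfl⟩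
  obtain ⟨B, hB⟩ : ∃ A, ⁅L (-1), K⁆ = A := ⟨_, rfl⟩
  obtain ⟨Q, hQ⟩ : ∃ A, ⁅L 1, B⁆ = A := ⟨_, rfl⟩
  obtain ⟨A2, hA2⟩ : ∃ A, ⁅L 1, Q⁆ = A := ⟨_, rfl⟩
  obtain ⟨B2, hB2⟩ : ∃ A, ⁅L (-1), Q⁆ = A := ⟨_, rfl⟩
  obtain ⟨A1, hA1⟩ : ∃ X, ⁅L 1, A⁆ = X := ⟨_, rfl⟩
  obtain ⟨A11, hA11⟩ : ∃ A, ⁅L 1, A1⁆ = A := ⟨_, rfl⟩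
  obtain ⟨A111, hA111⟩ : ∃ A, ⁅L 1, A11⁆ = A := ⟨_, rfl⟩
  obtain ⟨A1111, hA1111⟩ : ∃ A, ⁅L 1, A111⁆ = A := ⟨_, rfl⟩
  obtain ⟨A21, hA21⟩ : ∃ A, ⁅L 1, A2⁆ = A := ⟨_, rfl⟩
  obtain ⟨A211, hA211⟩ : ∃ A, ⁅L 1, A21⁆ = A := ⟨_, rfl⟩
  obtain ⟨Q2, hQ2⟩ : ∃ A, ⁅L (-1), A2⁆ = A := ⟨_, rfl⟩
  obtain ⟨A3, hA3⟩ : ∃ A, ⁅L 1, Q2⁆ = A := ⟨_, rfl⟩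
  obtain ⟨z0, fA, zA, zA1, zA11, zQ, zA2, d3, sA, tA, tA11, fA1, fA11, sA1, sA11, sA1111, AK, tQ⟩ :=
    vir_aux1 L K hg hl hTS hKT hKS A B Q A2 A1 A11 A111 A1111 A21 A211
      hA hB hQ hA2 hA1 hA11 hA111 hA1111 hA21 hA211
  have bm1 := hg (-1) 1 (by norm_num) (by norm_num)
  have b1m := hg 1 (-1) (by norm_num) (by norm_num)
  have bn1 := hl (-2) 1 (by norm_num) (by norm_num)
  norm_num at bm1 b1m bn1
  obtain ⟨hp, eB2, sA2, AB, AA1, AQ⟩ :=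
    vir_aux2a L K hg hl hTS hKT hKS A B Q A2 B2 A1 A11 A111 A1111 A21 A211 Q2 A3
      hA hB hQ hA2 hB2 hA1 hA11 hA111 hA1111 hA21 hA211 hQ2 hA3
  -- the same relations for the opposite family
  have hTS' : ⁅L (-2), L 2⁆ = -((4 : ℂ) • L 0 + (1/2 : ℂ) • K) := by rw [← lie_skew, hTS]
  obtain ⟨-, -, -, -, -, QB0⟩ :=
    vir_aux2a (fun n => -L (-n)) (-K)
      (by
        intro i j hi hj
        have := hl (-i) (-j) (by omega) (by omega)
        simp only [neg_lie, lie_neg, neg_neg, this]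
        rw [neg_add]; push_cast; module)
      (by
        intro i j hi hj
        have := hg (-i) (-j) (by omega) (by omega)
        simp only [neg_lie, lie_neg, neg_neg, this]
        rw [neg_add]; push_cast; module)
      (by
        simp only [neg_lie, lie_neg, neg_neg, neg_zero, hTS']; module)
      (by simp only [neg_lie, lie_neg, neg_neg, hKS])
      (by simp only [neg_lie, lie_neg, neg_neg, hKT])
      _ _ _ _ _ _ _ _ _ _ _ _ _ rfl rfl rfl rfl rfl rfl rfl rfl rfl rfl rfl rfl rfl
  simp only [neg_lie, lie_neg, neg_neg, hA, hB, fA, hB2] at QB0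
  have AA2 : ⁅A, A2⁆ = (89/6 : ℂ) • A21 + (107 : ℂ) • A1 := by
    have e1 := leibniz_lie (L (-1)) A A1
    have e2 := leibniz_lie (L 1) A Q
    have h2 : ⁅Q, A1⁆ = -⁅A1, Q⁆ := (lie_skew _ _).symm
    simp only [AA1, fA, fA1, fA11, h2, lie_add, lie_self, lie_smul] at e1
    simp only [AQ, hA1, hA2, hA21, lie_add, lie_smul] at e2
    linear_combination (norm := module) (-1/2 : ℂ) • e1 - (1/2 : ℂ) • e2
  have AB2 : ⁅A, B2⁆ = (286 : ℂ) • Q + (125/3 : ℂ) • Q2 := by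
    have := leibniz_lie (L (-1)) A Q
    simp only [AQ, fA, hB2, hQ2, lie_self, lie_add, lie_smul] at this
    linear_combination (norm := module) -this
  have QB : ⁅Q, B⁆ = (286 : ℂ) • B + (125/3 : ℂ) • B2 := by
    rw [← lie_skew]
    linear_combination (norm := module) QB0
  have A2B : ⁅A2, B⁆ = (286 : ℂ) • Q + (125/3 : ℂ) • Q2 := by
    have := leibniz_lie (L 1) Q B
    simp only [QB, hQ, hA2, eB2, lie_self, lie_add, lie_smul] at this
    linear_combination (norm := module) -this
  have sA21 : ⁅L (-2), A21⁆ = (44 : ℂ) • Q := by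
    have := leibniz_lie (L (-2)) (L 1) A2
    simp only [hA21, bn1, sA2, hQ2, hQ, eB2, smul_lie, neg_lie, lie_add, lie_smul] at this
    linear_combination (norm := module) this
  have hQ2Q : Q2 = (-1642/237 : ℂ) • Q := by
    have := leibniz_lie (L (-2)) A A2
    have h2 : ⁅B, A2⁆ = -⁅A2, B⁆ := (lie_skew _ _).symm
    simp only [AA2, sA, sA1, sA2, sA21, h2, A2B, AB, AB2, lie_add, smul_lie, lie_smul] at this
    linear_combination (norm := module) (-1/316 : ℂ) • this
  have h3 : A3 = (-1642/237 : ℂ) • A2 := by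
    rw [← hA3, hQ2Q, lie_smul, hA2]
  have h4 : (-1642/237 : ℂ) • Q2 = (588 : ℂ) • Q + (100 : ℂ) • Q2 := by
    have := congrArg (fun z => ⁅L (-1), z⁆) (h3.symm.trans hp)
    simpa only [lie_add, lie_smul, hQ2, fA] using this
  have hQ0 : Q = 0 := by
    have : ((-1642/237 : ℂ) * (-1642/237) - 588 - 100 * (-1642/237)) • Q = 0 := by
      rw [hQ2Q] at h4
      linear_combination (norm := module) h4
    rcases smul_eq_zero.1 this with h | h
    · norm_num at h
    · exact h
  have hA20 : A2 = 0 := by rw [← hA2, hQ0, lie_zero]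
  have hA0 : A = 0 := by
    have : (588 : ℂ) • A = 0 := by
      rw [h3, hA20] at hp
      linear_combination (norm := module) -hp
    rcases smul_eq_zero.1 this with h | h
    · norm_num at h
    · exact h
  have hB0 : B = 0 := by
    rw [hA0, lie_zero] at sA
    rcases smul_eq_zero.1 sA.symm with h | h
    · norm_num at h
    · exact h
  refine ⟨z0, by rw [hA, hA0], by rw [hB, hB0], ?_⟩
  rw [d3, hA0]; module

/-- The full Virasoro relations from the two halves. -/
theorem vir_aux3 {g : Type*} [LieRing g] [LieAlgebra ℂ g] (L : ℤ → g) (K : g)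
    (hg : ∀ i j : ℤ, -1 ≤ i → -1 ≤ j → ⁅L i, L j⁆ = ((i - j : ℤ) : ℂ) • L (i + j))
    (hl : ∀ i j : ℤ, i ≤ 1 → j ≤ 1 → ⁅L i, L j⁆ = ((i - j : ℤ) : ℂ) • L (i + j))
    (hTS : ⁅L 2, L (-2)⁆ = (4 : ℂ) • L 0 + (1/2 : ℂ) • K)
    (hKT : ⁅L 2, K⁆ = 0) (hKS : ⁅L (-2), K⁆ = 0) :
    (∀ i, ⁅L i, K⁆ = 0) ∧ ∀ i j : ℤ, ⁅L i, L j⁆ = ((i - j : ℤ) : ℂ) • L (i + j) +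
      (if i + j = 0 then (((i ^ 3 - i : ℤ) : ℂ) / 12) • K else 0) := by
  obtain ⟨h0, h1, hm1, d3⟩ := vir_aux2 L K hg hl hTS hKT hKS
  have cpos : ∀ n : ℕ, ⁅L (n + 2), K⁆ = 0 := by
    intro n
    induction n with
    | zero => simpa using hKT
    | succ n ih =>
      have e := hg 1 (n + 2) (by omega) (by omega)
      have := leibniz_lie (L 1) (L (n + 2)) K
      rw [ih, h1, e, lie_zero, lie_zero, smul_lie, add_zero] at this
      rcases smul_eq_zero.1 this.symm with h | h
      · exfalso; rw [Int.cast_eq_zero] at h; omega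
      · rw [← h]; congr 2; push_cast; ring
  have cneg : ∀ n : ℕ, ⁅L (-(n + 2)), K⁆ = 0 := by
    intro n
    induction n with
    | zero => simpa using hKS
    | succ n ih =>
      have e := hl (-1) (-(n + 2)) (by omega) (by omega)
      have := leibniz_lie (L (-1)) (L (-(n + 2))) K
      rw [ih, hm1, e, lie_zero, lie_zero, smul_lie, add_zero] at this
      rcases smul_eq_zero.1 this.symm with h | h
      · exfalso; rw [Int.cast_eq_zero] at h; omega
      · rw [← h]; congr 2; push_cast; ring
  have hc : ∀ i, ⁅L i, K⁆ = 0 := by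
    intro i
    rcases lt_or_ge i (-1) with h | h
    · obtain ⟨n, hn⟩ := Int.eq_ofNat_of_zero_le (show 0 ≤ -i - 2 by omega)
      have : i = -((n : ℤ) + 2) := by omega
      rw [this]; exact cneg n
    · rcases lt_or_ge i 2 with h' | h'
      · interval_cases i
        · exact hm1
        · exact h0
        · exact h1
      · obtain ⟨n, hn⟩ := Int.eq_ofNat_of_zero_le (show 0 ≤ i - 2 by omega)
        have : i = (n : ℤ) + 2 := by omega
        rw [this]; exact cpos n
  refine ⟨hc, ?_⟩
  -- brackets with `L (-2)`
  have dS : ∀ n : ℕ, ⁅L (n + 3), L (-2)⁆ = ((n : ℂ) + 5) • L (n + 1) := by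
    intro n
    induction n with
    | zero => simpa using d3
    | succ n ih =>
      have e := hg 1 (n + 3) (by omega) (by omega)
      have e2 := hg 1 (n + 1) (by omega) (by omega)
      have e3 := hg (n + 3) (-1) (by omega) (by omega)
      have e4 := hl 1 (-2) (by omega) (by omega)
      norm_num at e4
      have := leibniz_lie (L 1) (L (n + 3)) (L (-2))
      rw [ih, e, e4, lie_smul, lie_smul, e2, e3, smul_lie] at this
      have i1 : (1 : ℤ) + (n + 1) = n + 2 := by ring
      have i2 : (1 : ℤ) + (n + 3) = (n + 1 : ℕ) + 3 := by push_cast; ring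
      have i3 : (n : ℤ) + 3 + (-1) = n + 2 := by ring
      have i4 : ((n + 1 : ℕ) : ℤ) + 1 = n + 2 := by push_cast; ring
      rw [i1, i2, i3] at this
      rw [i4]
      have hn : ((n : ℂ) + 2) ≠ 0 := by exact_mod_cast (by omega : n + 2 ≠ 0)
      apply smul_right_injective g hn
      push_cast at this ⊢
      linear_combination (norm := module) this
  have key : ∀ m : ℕ, ∀ i : ℤ, -1 ≤ i → ⁅L i, L (-(m + 2))⁆ =
      ((i - (-(m + 2)) : ℤ) : ℂ) • L (i + (-(m + 2))) +
      (if i + (-(m + 2)) = 0 then (((i ^ 3 - i : ℤ) : ℂ) / 12) • K else 0) := by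
    intro m
    induction m with
    | zero =>
      intro i hi
      rcases lt_or_ge i 2 with h' | h'
      · have := hl i (-2) (by omega) (by omega)
        norm_num
        rw [this, if_neg (by omega)]
        push_cast; norm_num
      · rcases eq_or_lt_of_le h' with rfl | h'
        · norm_num
          rw [hTS]
        · obtain ⟨n, hn⟩ := Int.eq_ofNat_of_zero_le (show 0 ≤ i - 3 by omega)
          have hi' : i = (n : ℤ) + 3 := by omega
          have := dS n
          rw [if_neg (by push_cast; omega), hi']
          norm_num
          rw [this]
          have : (n : ℤ) + 3 + -2 = n + 1 := by ring
          rw [this]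
          module
    | succ m ih =>
      intro i hi
      rcases eq_or_lt_of_le hi with rfl | hi'
      · rw [hl _ _ (by omega) (by omega), if_neg (by omega), add_zero]
      · have e := hl (-1) (-(m + 2)) (by omega) (by omega)
        have e1 := hg i (-1) (by omega) (by omega)
        have e2 := ih i hi
        have e3 := ih (i + -1) (by omega)
        have i1 : (-1 : ℤ) + -(m + 2) = -(((m + 1 : ℕ) : ℤ) + 2) := by push_cast; ring
        have i2 : i + -1 + -((m : ℤ) + 2) = i + -(((m + 1 : ℕ) : ℤ) + 2) := by push_cast; ring
        have e4 : ⁅L (-1), L (i + (-(m + 2)))⁆ = (((m : ℤ) + 1 - i : ℤ) : ℂ) •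
            L (i + -(((m + 1 : ℕ) : ℤ) + 2)) := by
          have i3 : -1 + (i + -((m : ℤ) + 2)) = i + -(((m + 1 : ℕ) : ℤ) + 2) := by
            push_cast; ring
          have i4 : -1 - (i + -((m : ℤ) + 2)) = (m : ℤ) + 1 - i := by ring
          rw [← i3, ← i4]
          rcases le_total (i + -((m : ℤ) + 2)) 1 with h | h
          · exact hl _ _ (by omega) h
          · exact hg _ _ (by omega) (by omega)
        have e5 : ⁅L (-1), (if i + (-((m : ℤ) + 2)) = 0 then
            (((i ^ 3 - i : ℤ) : ℂ) / 12) • K else 0)⁆ = 0 := by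
          split_ifs
          · rw [lie_smul, hm1, smul_zero]
          · exact lie_zero _
        have := leibniz_lie (L i) (L (-1)) (L (-(m + 2)))
        rw [e, e1, e2, lie_add, e5, lie_smul, smul_lie, lie_smul, e3, e4, i1, i2] at this
        have hm : ((m : ℂ) + 1) ≠ 0 := by exact_mod_cast (by omega : m + 1 ≠ 0)
        apply smul_right_injective g hm
        by_cases hi0 : i + -(((m + 1 : ℕ) : ℤ) + 2) = 0
        · have him : i = (m : ℤ) + 3 := by push_cast at hi0; omega
          rw [if_pos hi0] at this ⊢
          generalize L (i + -(((m + 1 : ℕ) : ℤ) + 2)) = X at *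
          generalize ⁅L i, L (-(((m + 1 : ℕ) : ℤ) + 2))⁆ = Y at *
          subst him
          push_cast at this ⊢
          linear_combination (norm := module) this
        · rw [if_neg hi0] at this ⊢
          push_cast at this ⊢
          linear_combination (norm := module) this
  have key' : ∀ i j : ℤ, -1 ≤ i → ⁅L i, L j⁆ = ((i - j : ℤ) : ℂ) • L (i + j) +
      (if i + j = 0 then (((i ^ 3 - i : ℤ) : ℂ) / 12) • K else 0) := by
    intro i j hi
    rcases lt_or_ge j (-1) with h | h
    · obtain ⟨n, hn⟩ := Int.eq_ofNat_of_zero_le (show 0 ≤ -j - 2 by omega)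
      have : j = -((n : ℤ) + 2) := by omega
      rw [this]; exact key n i hi
    · rw [hg i j hi h]
      split_ifs with h0
      · have : i = -1 ∨ i = 0 ∨ i = 1 := by omega
        rcases this with rfl | rfl | rfl <;> norm_num
      · simp
  intro i j
  rcases lt_or_ge i (-1) with h | h
  · rcases lt_or_ge j (-1) with h' | h'
    · rw [hl i j (by omega) (by omega), if_neg (by omega), add_zero]
    · rw [← lie_skew, key' j i h', add_comm j i]
      split_ifs with h0
      · have : i = -j := by omega
        subst this
        push_cast
        module
      · push_cast
        module
  · exact key' i j h

/-- `vir_aux3` for the commutator bracket on endomorphisms. -/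
theorem vir_aux4 {V : Type*} [AddCommGroup V] [Module ℂ V] (L : ℤ → Module.End ℂ V)
    (K : Module.End ℂ V)
    (hg : ∀ i j : ℤ, -1 ≤ i → -1 ≤ j → ⁅L i, L j⁆ = ((i - j : ℤ) : ℂ) • L (i + j))
    (hl : ∀ i j : ℤ, i ≤ 1 → j ≤ 1 → ⁅L i, L j⁆ = ((i - j : ℤ) : ℂ) • L (i + j))
    (hTS : ⁅L 2, L (-2)⁆ = (4 : ℂ) • L 0 + (1/2 : ℂ) • K)
    (hKT : ⁅L 2, K⁆ = 0) (hKS : ⁅L (-2), K⁆ = 0) :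
    (∀ i, ⁅L i, K⁆ = 0) ∧ ∀ i j : ℤ, ⁅L i, L j⁆ = ((i - j : ℤ) : ℂ) • L (i + j) +
      (if i + j = 0 then (((i ^ 3 - i : ℤ) : ℂ) / 12) • K else 0) :=
  @vir_aux3 (Module.End ℂ V) LieRing.ofAssociativeRing LieAlgebra.ofAssociativeAlgebra
    L K hg hl hTS hKT hKS

/-- Skew symmetry of the commutator. -/
theorem vir_skew {V : Type*} [AddCommGroup V] [Module ℂ V] (a b : Module.End ℂ V) :
    -⁅b, a⁆ = ⁅a, b⁆ := by
  rw [Ring.lie_def, Ring.lie_def, neg_sub]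

/-- a Witt_>-structure and a Witt_<-structure extending a non trivial
sl(2)-representation glue to a Virasoro-module structure if and only if
`K = 4H − 2[S,T]` commutes with both `S = ρ^<₋₂` and `T = ρ^>₂`; in that case the
central element is necessarily represented by `K`. -/
theorem virasoro_gluing_iff
    (V : Type*) [AddCommGroup V] [Module ℂ V]
    (E F H : Module.End ℂ V)
    (hEF : ⁅E, F⁆ = H) (hHE : ⁅H, E⁆ = (2 : ℂ) • E) (hHF : ⁅H, F⁆ = (-2 : ℂ) • F)
    (hnt : ¬ (E = 0 ∧ F = 0 ∧ H = 0))
    (ρg ρl : ℤ → Module.End ℂ V)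
    (hg : IsWittGtModule E F H ρg) (hl : IsWittLtModule E F H ρl) :
    ((∃ (ρ : ℤ → Module.End ℂ V) (K' : Module.End ℂ V),
        IsVirasoroModule E F H ρ K' ∧
          (∀ i : ℤ, -1 ≤ i → ρ i = ρg i) ∧ (∀ i : ℤ, i ≤ 1 → ρ i = ρl i)) ↔
      (⁅(4 : ℂ) • H - (2 : ℂ) • ⁅ρl (-2), ρg 2⁆, ρl (-2)⁆ = 0 ∧
        ⁅(4 : ℂ) • H - (2 : ℂ) • ⁅ρl (-2), ρg 2⁆, ρg 2⁆ = 0)) ∧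
    (∀ (ρ : ℤ → Module.End ℂ V) (K' : Module.End ℂ V),
      IsVirasoroModule E F H ρ K' →
        (∀ i : ℤ, -1 ≤ i → ρ i = ρg i) → (∀ i : ℤ, i ≤ 1 → ρ i = ρl i) →
          K' = (4 : ℂ) • H - (2 : ℂ) • ⁅ρl (-2), ρg 2⁆) := by
  have hu : ∀ (ρ : ℤ → Module.End ℂ V) (K' : Module.End ℂ V),
      IsVirasoroModule E F H ρ K' →
        (∀ i : ℤ, -1 ≤ i → ρ i = ρg i) → (∀ i : ℤ, i ≤ 1 → ρ i = ρl i) →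
          K' = (4 : ℂ) • H - (2 : ℂ) • ⁅ρl (-2), ρg 2⁆ := by
    rintro ρ K' ⟨-, h0, -, -, hV⟩ h1 h2
    rw [← h1 2 (by norm_num), ← h2 (-2) (by norm_num), hV (-2) 2]
    norm_num
    rw [h0]
    module
  refine ⟨⟨?_, ?_⟩, hu⟩
  · rintro ⟨ρ, K', hV, h1, h2⟩
    rw [← hu ρ K' hV h1 h2, ← h1 2 (by norm_num), ← h2 (-2) (by norm_num)]
    exact ⟨hV.2.2.2.1 _, hV.2.2.2.1 _⟩
  · rintro ⟨hS, hT⟩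
    obtain ⟨gm, g0, g1, hg⟩ := hg
    obtain ⟨lm, l0, l1, hl⟩ := hl
    obtain ⟨K, hK⟩ : ∃ K, (4 : ℂ) • H - (2 : ℂ) • ⁅ρl (-2), ρg 2⁆ = K := ⟨_, rfl⟩
    rw [hK] at hS hT
    obtain ⟨L, hL⟩ : ∃ L : ℤ → Module.End ℂ V, L = fun i => if -1 ≤ i then ρg i else ρl i :=
      ⟨_, rfl⟩
    have Lg : ∀ i : ℤ, -1 ≤ i → L i = ρg i := by
      intro i hi
      rw [hL]; exact if_pos hi
    have Ll : ∀ i : ℤ, i ≤ 1 → L i = ρl i := by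
      intro i hi
      by_cases h : -1 ≤ i
      · rw [Lg i h]
        have : i = -1 ∨ i = 0 ∨ i = 1 := by omega
        rcases this with rfl | rfl | rfl
        · rw [gm, lm]
        · rw [g0, l0]
        · rw [g1, l1]
      · rw [hL]; exact if_neg h
    have h0 : L 0 = (-(1/2) : ℂ) • H := by rw [Lg 0 (by norm_num), g0]
    obtain ⟨hc, hV⟩ := vir_aux4 L K
      (by
        intro i j hi hj
        rw [Lg i hi, Lg j hj, hg i j hi hj]
        by_cases hij : -1 ≤ i + j
        · rw [Lg _ hij]
        · have h1 : i = -1 := by omega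
          have h2 : j = -1 := by omega
          subst h1; subst h2
          norm_num)
      (by
        intro i j hi hj
        rw [Ll i hi, Ll j hj, hl i j hi hj]
        by_cases hij : i + j ≤ 1
        · rw [Ll _ hij]
        · have h1 : i = 1 := by omega
          have h2 : j = 1 := by omega
          subst h1; subst h2
          norm_num)
      (by
        rw [h0, Lg 2 (by norm_num), Ll (-2) (by norm_num), ← hK, ← vir_skew (ρg 2)]
        module)
      (by rw [Lg 2 (by norm_num), ← vir_skew, hT, neg_zero])
      (by rw [Ll (-2) (by norm_num), ← vir_skew, hS, neg_zero])
    refine ⟨L, K, ⟨?_, h0, ?_, ?_, hV⟩, Lg, Ll⟩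
    · rw [Lg _ (by norm_num), gm]
    · rw [Lg _ (by norm_num), g1]
    · intro i
      rw [← vir_skew, hc i, neg_zero]
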